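/- arXiv:1810.09129 — 5 statements merged into one kernel-verified Lean document; each statement's English description precedes it below -/
import Mathlib

section
/- Let L be a Lie superalgebra over a field of characteristic not 2 or 3 with dim(L/Z(L)) = (m | n), where Z(L) is the center. Then dim L' ≤ (1/2)[(m+n)^2 + (n-m)], where L' = [L,L] is the derived subalgebra. -/
open Module Function TensorProduct

/-- A Lie superalgebra over a field `K`, encoded via a grading involution `J`
(the even part is the `+1`-eigenspace, the odd part the `-1`-eigenspace),
a bilinear bracket `br` satisfying graded skew-symmetry and the graded
Jacobi identity on homogeneous elements. -/
structure SuperLie (K : Type) [Field K] : Type 1 where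
  carrier : Type
  [acg : AddCommGroup carrier]
  [mod : Module K carrier]
  J : carrier →ₗ[K] carrier
  br : carrier →ₗ[K] carrier →ₗ[K] carrier
  J_inv : ∀ x, J (J x) = x
  J_br : ∀ x y, J (br x y) = br (J x) (J y)
  skew_e : ∀ x y, J x = x → br x y = - br y x
  skew_o : ∀ x y, J x = -x → J y = -y → br x y = br y x
  jacobi : ∀ (a b c : Bool) (x y z : carrier),
    J x = (if a then -x else x) → J y = (if b then -y else y) →
    J z = (if c then -z else z) →
    (if a && c then (-1 : K) else 1) • br x (br y z)
      + (if b && a then (-1 : K) else 1) • br y (br z x)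
      + (if c && b then (-1 : K) else 1) • br z (br x y) = 0

attribute [instance] SuperLie.acg SuperLie.mod

namespace SuperLie

variable {K : Type} [Field K]

/-- The even part `L₀`. -/
def evenPart (A : SuperLie K) : Submodule K A.carrier :=
  LinearMap.ker (A.J - LinearMap.id)

/-- The odd part `L₁`. -/
def oddPart (A : SuperLie K) : Submodule K A.carrier :=
  LinearMap.ker (A.J + LinearMap.id)

/-- The center `Z(L) = {z | [z,x] = 0 for all x}`. -/
def center (A : SuperLie K) : Submodule K A.carrier :=
  ⨅ y, LinearMap.ker (A.br.flip y)

/-- The derived subalgebra `L' = [L,L]`. -/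
def derived (A : SuperLie K) : Submodule K A.carrier :=
  Submodule.span K {z | ∃ x y, A.br x y = z}

/-- The descending central series `C⁰(L) = L`, `C^{k+1}(L) = [C^k(L), L]`. -/
def lcs (A : SuperLie K) : ℕ → Submodule K A.carrier
  | 0 => ⊤
  | (k+1) => Submodule.span K {z | ∃ x ∈ lcs A k, ∃ y, A.br x y = z}

/-- The second center `Z₂(L)`: those `x` with `[x,y] ∈ Z(L)` for all `y`. -/
def Z2 (A : SuperLie K) : Submodule K A.carrier :=
  ⨅ y, Submodule.comap (A.br.flip y) A.center

/-- Nilpotency: the descending central series terminates at zero. -/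
def IsNilpotent (A : SuperLie K) : Prop := ∃ k, A.lcs k = ⊥

/-- Abelian: identically vanishing bracket. -/
def IsAbelian (A : SuperLie K) : Prop := ∀ x y, A.br x y = 0

/-- A homomorphism of Lie superalgebras: an even linear map commuting with the
grading and preserving brackets. -/
structure Hom (A B : SuperLie K) where
  toLin : A.carrier →ₗ[K] B.carrier
  map_J : ∀ x, toLin (A.J x) = B.J (toLin x)
  map_br : ∀ x y, toLin (A.br x y) = B.br (toLin x) (toLin y)

/-- The dimension of the Schur multiplier `M(A)`, characterized as the maximal
dimension of the kernel of a stem extension `0 → M → B → A → 0`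
(i.e. `M = ker f ⊆ Z(B) ∩ B'`); a stem extension of maximal dimension is a
stem cover, whose kernel is isomorphic to the Schur multiplier
`M(A) = ([F,F] ∩ R)/[F,R]` coming from any free presentation `0 → R → F → A → 0`. -/
noncomputable def multDim (A : SuperLie K) : ℕ :=
  sSup {d | ∃ (B : SuperLie K) (f : Hom B A),
    Surjective f.toLin ∧
    LinearMap.ker f.toLin ≤ B.center ⊓ B.derived ∧
    finrank K (LinearMap.ker f.toLin) = d}

/-- `A ≅ H(0,1)`: basis `z` (even), `y` (odd), `[y,y] = z`, `z` central. -/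
def IsH01 (A : SuperLie K) : Prop :=
  ∃ z y : A.carrier, z ∈ A.evenPart ∧ y ∈ A.oddPart ∧
    LinearIndependent K ![z, y] ∧
    Submodule.span K ({z, y} : Set A.carrier) = ⊤ ∧
    A.br y y = z ∧ z ∈ A.center

/-- `A ≅ H(1,0)`: the purely even 3-dimensional Heisenberg algebra. -/
def IsH10 (A : SuperLie K) : Prop :=
  ∃ x y z : A.carrier, x ∈ A.evenPart ∧ y ∈ A.evenPart ∧ z ∈ A.evenPart ∧
    LinearIndependent K ![x, y, z] ∧
    Submodule.span K ({x, y, z} : Set A.carrier) = ⊤ ∧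
    A.br x y = z ∧ z ∈ A.center

/-- `A ≅ H(0,2)`: even basis `{z}`, odd basis `{y₁,y₂}`, `[yᵢ,yᵢ] = z`. -/
def IsH02 (A : SuperLie K) : Prop :=
  ∃ z y₁ y₂ : A.carrier, z ∈ A.evenPart ∧ y₁ ∈ A.oddPart ∧ y₂ ∈ A.oddPart ∧
    LinearIndependent K ![z, y₁, y₂] ∧
    Submodule.span K ({z, y₁, y₂} : Set A.carrier) = ⊤ ∧
    A.br y₁ y₁ = z ∧ A.br y₂ y₂ = z ∧ A.br y₁ y₂ = 0 ∧ z ∈ A.center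

/-- `A ≅ H₁`: even basis `{x}`, odd basis `{y,z}`, `[x,y] = z`, `z` central. -/
def IsHodd1 (A : SuperLie K) : Prop :=
  ∃ x y z : A.carrier, x ∈ A.evenPart ∧ y ∈ A.oddPart ∧ z ∈ A.oddPart ∧
    LinearIndependent K ![x, y, z] ∧
    Submodule.span K ({x, y, z} : Set A.carrier) = ⊤ ∧
    A.br x y = z ∧ A.br y y = 0 ∧ z ∈ A.center

/-- `A ≅ H(p,q)`: the special Heisenberg Lie superalgebra with even center,
of superdimension `(2p+1 | q)`: even basis `x₁,…,x_{2p}, z` with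
`[xᵢ, x_{p+i}] = z`, odd basis `y₁,…,y_q` with `[yⱼ,yⱼ] = z`, `z` central. -/
def IsHeisEven (A : SuperLie K) (p q : ℕ) : Prop :=
  ∃ (x : Fin (2*p) → A.carrier) (y : Fin q → A.carrier) (z : A.carrier),
    (∀ i, x i ∈ A.evenPart) ∧ (∀ j, y j ∈ A.oddPart) ∧ z ∈ A.evenPart ∧
    LinearIndependent K (Sum.elim x (Sum.elim y (fun _ : Fin 1 => z))) ∧
    Submodule.span K (Set.range (Sum.elim x (Sum.elim y (fun _ : Fin 1 => z)))) = ⊤ ∧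
    (∀ i j : Fin (2*p), A.br (x i) (x j) =
      if (j : ℕ) = (i : ℕ) + p then z else if (i : ℕ) = (j : ℕ) + p then -z else 0) ∧
    (∀ i j : Fin q, A.br (y i) (y j) = if i = j then z else 0) ∧
    (∀ i j, A.br (x i) (y j) = 0) ∧ z ∈ A.center

/-- `A ≅ H_p`: the special Heisenberg Lie superalgebra with odd center, of
superdimension `(p | p+1)`: even basis `x₁,…,x_p`, odd basis `y₁,…,y_p, z`,
with `[xᵢ, yᵢ] = z` and `z` central. -/
def IsHeisOdd (A : SuperLie K) (p : ℕ) : Prop :=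
  ∃ (x : Fin p → A.carrier) (y : Fin p → A.carrier) (z : A.carrier),
    (∀ i, x i ∈ A.evenPart) ∧ (∀ j, y j ∈ A.oddPart) ∧ z ∈ A.oddPart ∧
    LinearIndependent K (Sum.elim x (Sum.elim y (fun _ : Fin 1 => z))) ∧
    Submodule.span K (Set.range (Sum.elim x (Sum.elim y (fun _ : Fin 1 => z)))) = ⊤ ∧
    (∀ i j : Fin p, A.br (x i) (x j) = 0) ∧
    (∀ i j : Fin p, A.br (y i) (y j) = 0) ∧
    (∀ i j : Fin p, A.br (x i) (y j) = if i = j then z else 0) ∧ z ∈ A.center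

/-- `A ≅ H(p,q) ⊕ A(a|b)`: direct sum of the special Heisenberg Lie
superalgebra with even center and an abelian superalgebra of superdimension
`(a|b)` (central basis vectors `u₁,…,u_a` even and `v₁,…,v_b` odd). -/
def IsHeisEvenSum (A : SuperLie K) (p q a b : ℕ) : Prop :=
  ∃ (x : Fin (2*p) → A.carrier) (y : Fin q → A.carrier) (z : A.carrier)
    (u : Fin a → A.carrier) (v : Fin b → A.carrier),
    (∀ i, x i ∈ A.evenPart) ∧ (∀ j, y j ∈ A.oddPart) ∧ z ∈ A.evenPart ∧
    (∀ i, u i ∈ A.evenPart) ∧ (∀ j, v j ∈ A.oddPart) ∧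
    LinearIndependent K
      (Sum.elim x (Sum.elim y (Sum.elim (fun _ : Fin 1 => z) (Sum.elim u v)))) ∧
    Submodule.span K (Set.range
      (Sum.elim x (Sum.elim y (Sum.elim (fun _ : Fin 1 => z) (Sum.elim u v))))) = ⊤ ∧
    (∀ i j : Fin (2*p), A.br (x i) (x j) =
      if (j : ℕ) = (i : ℕ) + p then z else if (i : ℕ) = (j : ℕ) + p then -z else 0) ∧
    (∀ i j : Fin q, A.br (y i) (y j) = if i = j then z else 0) ∧
    (∀ i j, A.br (x i) (y j) = 0) ∧ z ∈ A.center ∧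
    (∀ i, u i ∈ A.center) ∧ (∀ j, v j ∈ A.center)

/-- `A ≅ H_p ⊕ A(a|b)`: direct sum of the special Heisenberg Lie superalgebra
with odd center and an abelian superalgebra of superdimension `(a|b)`. -/
def IsHeisOddSum (A : SuperLie K) (p a b : ℕ) : Prop :=
  ∃ (x : Fin p → A.carrier) (y : Fin p → A.carrier) (z : A.carrier)
    (u : Fin a → A.carrier) (v : Fin b → A.carrier),
    (∀ i, x i ∈ A.evenPart) ∧ (∀ j, y j ∈ A.oddPart) ∧ z ∈ A.oddPart ∧
    (∀ i, u i ∈ A.evenPart) ∧ (∀ j, v j ∈ A.oddPart) ∧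
    LinearIndependent K
      (Sum.elim x (Sum.elim y (Sum.elim (fun _ : Fin 1 => z) (Sum.elim u v)))) ∧
    Submodule.span K (Set.range
      (Sum.elim x (Sum.elim y (Sum.elim (fun _ : Fin 1 => z) (Sum.elim u v))))) = ⊤ ∧
    (∀ i j : Fin p, A.br (x i) (x j) = 0) ∧
    (∀ i j : Fin p, A.br (y i) (y j) = 0) ∧
    (∀ i j : Fin p, A.br (x i) (y j) = if i = j then z else 0) ∧ z ∈ A.center ∧
    (∀ i, u i ∈ A.center) ∧ (∀ j, v j ∈ A.center)

/-- `A ≅ L_{4,0}`: purely even filiform algebra, basis `x,y,z,w`,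
`[x,y] = z`, `[y,z] = w`, all other basis brackets zero. -/
def IsL40 (A : SuperLie K) : Prop :=
  ∃ x y z w : A.carrier,
    x ∈ A.evenPart ∧ y ∈ A.evenPart ∧ z ∈ A.evenPart ∧ w ∈ A.evenPart ∧
    LinearIndependent K ![x, y, z, w] ∧
    Submodule.span K ({x, y, z, w} : Set A.carrier) = ⊤ ∧
    A.br x y = z ∧ A.br y z = w ∧ A.br x z = 0 ∧
    A.br x w = 0 ∧ A.br y w = 0 ∧ A.br z w = 0

/-- `A ≅ L_{5,0}^2`: purely even, basis `x,y,z,v,w`, `[x,y] = v`, `[y,z] = w`,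
with `v, w` central and all other basis brackets zero. -/
def IsL502 (A : SuperLie K) : Prop :=
  ∃ x y z v w : A.carrier,
    x ∈ A.evenPart ∧ y ∈ A.evenPart ∧ z ∈ A.evenPart ∧
    v ∈ A.evenPart ∧ w ∈ A.evenPart ∧
    LinearIndependent K ![x, y, z, v, w] ∧
    Submodule.span K ({x, y, z, v, w} : Set A.carrier) = ⊤ ∧
    A.br x y = v ∧ A.br y z = w ∧ A.br x z = 0 ∧
    v ∈ A.center ∧ w ∈ A.center

end SuperLie

open SuperLie
namespace SuperLie
variable {K : Type} [Field K]

lemma mem_center_iff' (A : SuperLie K) (z : A.carrier) :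
    z ∈ A.center ↔ ∀ y, A.br z y = 0 := by
  simp [center, Submodule.mem_iInf, LinearMap.mem_ker]

lemma mem_even_iff' (A : SuperLie K) (z : A.carrier) :
    z ∈ A.evenPart ↔ A.J z = z := by
  simp [evenPart, LinearMap.mem_ker, sub_eq_zero]

lemma mem_odd_iff' (A : SuperLie K) (z : A.carrier) :
    z ∈ A.oddPart ↔ A.J z = -z := by
  simp [oddPart, LinearMap.mem_ker, add_eq_zero_iff_eq_neg]

lemma decomp' (h2 : (2 : K) ≠ 0) (A : SuperLie K) (x : A.carrier) :
    ∃ e o, A.J e = e ∧ A.J o = -o ∧ x = e + o ∧ e = (2⁻¹ : K) • (x + A.J x) := by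
  refine ⟨(2⁻¹ : K) • (x + A.J x), (2⁻¹ : K) • (x - A.J x), ?_, ?_, ?_, rfl⟩
  · simp [A.J_inv, add_comm]
  · simp [A.J_inv, ← smul_neg]
  · rw [← smul_add, show x + A.J x + (x - A.J x) = (2 : K) • x by rw [two_smul]; abel,
      smul_smul, inv_mul_cancel₀ h2, one_smul]

lemma center_right (h2 : (2 : K) ≠ 0) (A : SuperLie K) (z y : A.carrier)
    (hz : z ∈ A.center) : A.br y z = 0 := by
  have hJ : A.J z ∈ A.center := by
    rw [mem_center_iff'] at hz ⊢
    intro w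
    have := A.J_br z (A.J w)
    rw [hz, A.J_inv, map_zero] at this
    exact this.symm
  obtain ⟨z0, z1, hz0, hz1, hzz, hze⟩ := decomp' h2 A z
  have c0 : z0 ∈ A.center := by
    rw [hze]; exact A.center.smul_mem _ (A.center.add_mem hz hJ)
  have c1 : z1 ∈ A.center := by
    have : z1 = z - z0 := by rw [hzz]; abel
    rw [this]; exact A.center.sub_mem hz c0
  obtain ⟨e, o, he, ho, hy, -⟩ := decomp' h2 A y
  rw [mem_center_iff'] at hz c0 c1
  have h1 : A.br e z = 0 := by rw [A.skew_e e z he, hz, neg_zero]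
  have h3 : A.br o z0 = 0 := by
    have := A.skew_e z0 o hz0
    rw [c0] at this
    exact neg_eq_zero.mp this.symm
  have h4 : A.br o z1 = 0 := by rw [A.skew_o o z1 ho hz1, c1]
  rw [hy, map_add, LinearMap.add_apply, h1, hzz, map_add, h3, h4]; simp

lemma lift_basis (A : SuperLie K) [FiniteDimensional K A.carrier]
    (P : Submodule K A.carrier) (m : ℕ) (hm : m = finrank K (P.map A.center.mkQ)) :
    ∃ x : Fin m → A.carrier, (∀ i, x i ∈ P) ∧
      ∀ p ∈ P, ∃ s ∈ Submodule.span K (Set.range x), ∃ z ∈ A.center, p = s + z := by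
  let b := (finBasis K (P.map A.center.mkQ)).reindex (finCongr hm.symm)
  have hb : ∀ i, ∃ y ∈ P, A.center.mkQ y = (b i : A.carrier ⧸ A.center) := fun i => (b i).2
  choose x hx hxb using hb
  refine ⟨x, hx, fun p hp => ?_⟩
  let q : P.map A.center.mkQ := ⟨A.center.mkQ p, Submodule.mem_map_of_mem hp⟩
  refine ⟨∑ i, b.repr q i • x i, ?_, p - ∑ i, b.repr q i • x i, ?_, by abel⟩
  · exact Submodule.sum_mem _ fun i _ => Submodule.smul_mem _ _ (Submodule.subset_span ⟨i, rfl⟩)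
  · refine (Submodule.Quotient.mk_eq_zero _).mp ?_
    change A.center.mkQ _ = 0
    rw [map_sub, map_sum]
    simp only [map_smul, hxb]
    have := congrArg Subtype.val (b.sum_repr q)
    simp only [Submodule.coe_sum, Submodule.coe_smul] at this
    rw [this, sub_self]

end SuperLie

/-- If `dim(L/Z(L)) = (m|n)` then `dim L' ≤ ½[(m+n)² + (n-m)]`. -/
theorem stmt0 {K : Type} [Field K] (h2 : (2 : K) ≠ 0) (h3 : (3 : K) ≠ 0)
    (A : SuperLie K) [FiniteDimensional K A.carrier] (m n : ℕ)
    (hm : m = finrank K (A.evenPart.map A.center.mkQ))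
    (hn : n = finrank K (A.oddPart.map A.center.mkQ)) :
    2 * (finrank K A.derived : ℤ) ≤ ((m : ℤ) + n)^2 + (n - m) := by
  classical
  obtain ⟨x, hx, hxs⟩ := lift_basis A _ m hm
  obtain ⟨y, hy, hys⟩ := lift_basis A _ n hn
  simp only [mem_even_iff'] at hx hxs
  simp only [mem_odd_iff'] at hy hys
  let f : {p : Sym2 (Fin m) // ¬ p.IsDiag} ⊕ ((Fin m × Fin n) ⊕ Sym2 (Fin n)) → A.carrier :=
    Sum.elim (fun p => A.br (x (Quot.out p.1).1) (x (Quot.out p.1).2))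
      (Sum.elim (fun p => A.br (x p.1) (y p.2))
        (fun p => A.br (y (Quot.out p).1) (y (Quot.out p).2)))
  have out_eq : ∀ {k : ℕ} (i j : Fin k),
      ((Quot.out s(i, j)).1 = i ∧ (Quot.out s(i, j)).2 = j) ∨
      ((Quot.out s(i, j)).1 = j ∧ (Quot.out s(i, j)).2 = i) := by
    intro k i j
    have h : s((Quot.out s(i, j)).1, (Quot.out s(i, j)).2) = s(i, j) := Quot.out_eq _
    exact Sym2.eq_iff.mp h
  let F := Submodule.span K (Set.range f)
  have hxx : ∀ i j, A.br (x i) (x j) ∈ F := by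
    intro i j
    by_cases hij : i = j
    · subst hij
      have h := A.skew_e (x i) (x i) (hx i)
      have h0 : (2 : K) • A.br (x i) (x i) = 0 := by
        rw [two_smul]; nth_rewrite 1 [h]; simp
      rw [(smul_eq_zero.mp h0).resolve_left h2]
      exact F.zero_mem
    · have hm : f (Sum.inl ⟨s(i, j), by simpa using hij⟩) ∈ F :=
        Submodule.subset_span ⟨_, rfl⟩
      simp only [f, Sum.elim_inl] at hm
      rcases out_eq i j with ⟨h, h'⟩ | ⟨h, h'⟩
      · rwa [h, h'] at hm
      · rw [h, h'] at hm
        rw [A.skew_e _ _ (hx i)]; exact F.neg_mem hm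
  have hyy : ∀ i j, A.br (y i) (y j) ∈ F := by
    intro i j
    have hm : f (Sum.inr (Sum.inr s(i, j))) ∈ F := Submodule.subset_span ⟨_, rfl⟩
    simp only [f, Sum.elim_inr] at hm
    rcases out_eq i j with ⟨h, h'⟩ | ⟨h, h'⟩
    · rwa [h, h'] at hm
    · rw [h, h'] at hm
      rwa [A.skew_o _ _ (hy i) (hy j)]
  have hxy : ∀ i j, A.br (x i) (y j) ∈ F := fun i j =>
    Submodule.subset_span ⟨Sum.inr (Sum.inl (i, j)), rfl⟩
  have hyx : ∀ i j, A.br (y i) (x j) ∈ F := fun i j => by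
    have := F.neg_mem (hxy j i)
    rwa [← neg_neg (A.br (y i) (x j)), ← A.skew_e _ _ (hx j)]
  let g : Set A.carrier := Set.range x ∪ Set.range y
  have hdec : ∀ a, ∃ s ∈ Submodule.span K g, ∃ z ∈ A.center, a = s + z := by
    intro a
    obtain ⟨e, o, he, ho, rfl, -⟩ := decomp' h2 A a
    obtain ⟨s, hs, z, hz, rfl⟩ := hxs e he
    obtain ⟨t, ht, w, hw, rfl⟩ := hys o ho
    exact ⟨s + t, Submodule.add_mem _ (Submodule.span_mono Set.subset_union_left hs)
      (Submodule.span_mono Set.subset_union_right ht), z + w, A.center.add_mem hz hw, by abel⟩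
  have hD : A.derived ≤ F := by
    refine Submodule.span_le.mpr ?_
    rintro _ ⟨a, c, rfl⟩
    obtain ⟨s, hs, z, hz, rfl⟩ := hdec a
    obtain ⟨t, ht, w, hw, rfl⟩ := hdec c
    have e : A.br (s + z) (t + w) = A.br s t := by
      rw [map_add, center_right h2 A w _ hw, map_add, LinearMap.add_apply,
        (mem_center_iff' A z).mp hz]; simp
    rw [e]
    have h1 : Submodule.map₂ A.br (Submodule.span K g) (Submodule.span K g) ≤ F := by
      rw [Submodule.map₂_span_span, Submodule.span_le]
      rintro _ ⟨a, ha, c, hc, rfl⟩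
      rcases ha with ⟨i, rfl⟩ | ⟨i, rfl⟩ <;> rcases hc with ⟨j, rfl⟩ | ⟨j, rfl⟩
      exacts [hxx i j, hxy i j, hyx i j, hyy i j]
    exact h1 (Submodule.apply_mem_map₂ _ hs ht)
  have hc : finrank K A.derived ≤ m.choose 2 + (m * n + (n + 1).choose 2) := by
    refine (Submodule.finrank_mono hD).trans ((finrank_range_le_card f).trans ?_)
    rw [Fintype.card_sum, Fintype.card_sum, Sym2.card_subtype_not_diag, Sym2.card]
    simp
  have e1 : (m.choose 2 : ℤ) * 2 = m * (m - 1) := by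
    rcases m with _ | k
    · simp
    · have : (k + 1).choose 2 * 2 = (k + 1) * k := by
        rw [Nat.choose_two_right, Nat.add_sub_cancel]
        exact Nat.div_mul_cancel (by rw [mul_comm]; exact (Nat.even_mul_succ_self k).two_dvd)
      push_cast
      have := congrArg (Nat.cast : ℕ → ℤ) this
      push_cast at this
      linarith
  have e2 : ((n + 1).choose 2 : ℤ) * 2 = (n + 1) * n := by
    have : (n + 1).choose 2 * 2 = (n + 1) * n := by
      rw [Nat.choose_two_right, Nat.add_sub_cancel]
      exact Nat.div_mul_cancel (by rw [mul_comm]; exact (Nat.even_mul_succ_self n).two_dvd)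
    exact_mod_cast this
  have hc' : (finrank K A.derived : ℤ) ≤ m.choose 2 + (m * n + (n + 1).choose 2) := by
    exact_mod_cast hc
  nlinarith
end

section
/- Let L be a non-abelian nilpotent Lie superalgebra of total dimension 2 over a field of characteristic ≠ 2,3. Then L is isomorphic to H(0,1), the Lie superalgebra with even basis {z}, odd basis {y}, and the only nonzero bracket [y,y] = z. -/
open Module Function TensorProduct

namespace SuperLie

theorem lcs_step {K : Type} [Field K] (A : SuperLie K) {k m : ℕ} (h : A.lcs k ≤ A.lcs m) :
    A.lcs (k+1) ≤ A.lcs (m+1) := by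
  apply Submodule.span_mono
  rintro z ⟨x, hx, y, rfl⟩
  exact ⟨x, h hx, y, rfl⟩

theorem lcs_const {K : Type} [Field K] (A : SuperLie K) {k : ℕ} (h : A.lcs k ≤ A.lcs (k+1))
    (n : ℕ) : A.lcs k ≤ A.lcs (k + n) := by
  induction n with
  | zero => exact le_rfl
  | succ n ih => exact h.trans (A.lcs_step ih)

theorem lcs_anti {K : Type} [Field K] (A : SuperLie K) (k : ℕ) : A.lcs (k+1) ≤ A.lcs k := by
  induction k with
  | zero => exact le_top
  | succ n ih => exact A.lcs_step ih

theorem lcs_anti_add {K : Type} [Field K] (A : SuperLie K) (k n : ℕ) :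
    A.lcs (k + n) ≤ A.lcs k := by
  induction n with
  | zero => exact le_rfl
  | succ n ih => exact (A.lcs_anti (k + n)).trans ih

/-- In a nilpotent superalgebra, a stationary term of the series is zero. -/
theorem lcs_eq_bot {K : Type} [Field K] (A : SuperLie K) (hn : A.IsNilpotent) {k : ℕ}
    (h : A.lcs k ≤ A.lcs (k+1)) : A.lcs k = ⊥ := by
  obtain ⟨n, hn⟩ := hn
  have h1 := A.lcs_const h n
  have h3 := A.lcs_anti_add n k
  rw [add_comm n k, hn] at h3
  exact le_bot_iff.mp (h1.trans h3)

theorem br_mem {K : Type} [Field K] (A : SuperLie K) (x y : A.carrier) :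
    A.br x y ∈ A.lcs 1 :=
  Submodule.subset_span ⟨x, Submodule.mem_top, y, rfl⟩

/-- Left-central elements are right-central. -/
theorem right_central {K : Type} [Field K] (h2 : (2 : K) ≠ 0) (A : SuperLie K)
    {u y : A.carrier} (hu : ∀ v, A.br u v = 0) (hy : A.J y = y ∨ A.J y = -y) :
    A.br y u = 0 := by
  have hJ : ∀ v, A.br (A.J u) v = 0 := by
    intro v
    have := A.J_br u (A.J v)
    rw [A.J_inv, hu, map_zero] at this
    exact this.symm
  rcases hy with hy | hy
  · rw [A.skew_e y u hy, hu, neg_zero]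
  · have e1 : A.br (u + A.J u) y = - A.br y (u + A.J u) :=
      A.skew_e _ _ (by rw [map_add, A.J_inv, add_comm])
    have e2 : A.br (u - A.J u) y = A.br y (u - A.J u) :=
      A.skew_o _ _ (by rw [map_sub, A.J_inv, neg_sub]) hy
    simp only [map_add, map_sub, LinearMap.add_apply, LinearMap.sub_apply, hu, hJ,
      add_zero, sub_zero] at e1 e2
    have e3 : (2 : K) • A.br y u = 0 := by
      rw [two_smul]
      have a1 : A.br y u + A.br y (A.J u) = 0 := neg_eq_zero.mp e1.symm
      have a2 := sub_eq_zero.mp e2.symm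
      rw [← a2] at a1
      exact a1
    exact (smul_eq_zero.mp e3).resolve_left h2

theorem indep_span {K : Type} [Field K] (A : SuperLie K) [FiniteDimensional K A.carrier]
    (hdim : finrank K A.carrier = 2) (D : Submodule K A.carrier) {w y : A.carrier}
    (hw : w ∈ D) (hw0 : w ≠ 0) (hy : y ∉ D) :
    LinearIndependent K ![w, y] ∧ Submodule.span K ({w, y} : Set A.carrier) = ⊤ := by
  have hli : LinearIndependent K ![w, y] := by
    rw [LinearIndependent.pair_iff' hw0]
    intro a h
    exact hy (h ▸ D.smul_mem a hw)
  refine ⟨hli, ?_⟩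
  have := hli.span_eq_top_of_card_eq_finrank (by simp [hdim])
  simpa [Matrix.range_cons, Set.pair_comm, Set.insert_comm] using this

end SuperLie

open SuperLie
/-- A non-abelian nilpotent Lie superalgebra of total dimension 2
is isomorphic to `H(0,1)`. -/
theorem stmt7 {K : Type} [Field K] (h2 : (2 : K) ≠ 0) (h3 : (3 : K) ≠ 0)
    (A : SuperLie K) [FiniteDimensional K A.carrier]
    (hnil : A.IsNilpotent) (hna : ¬ A.IsAbelian)
    (hdim : finrank K A.carrier = 2) :
    A.IsH01 := by
  have hD0 : A.lcs 1 ≠ ⊥ := by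
    intro h
    apply hna
    intro x y
    have := A.br_mem x y
    rwa [h, Submodule.mem_bot] at this
  have hD1 : A.lcs 1 ≠ ⊤ := by
    intro h
    have h0 : A.lcs 0 = ⊥ := A.lcs_eq_bot hnil (by rw [zero_add, h]; exact le_top)
    exact hD0 (le_bot_iff.mp ((A.lcs_anti 0).trans h0.le))
  -- a homogeneous element outside the derived algebra
  obtain ⟨y, hyJ, hyD⟩ : ∃ y, (A.J y = y ∨ A.J y = -y) ∧ y ∉ A.lcs 1 := by
    by_contra! hcon
    apply hD1
    rw [eq_top_iff]
    intro x _
    have m1 := hcon (x + A.J x) (Or.inl (by rw [map_add, A.J_inv, add_comm]))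
    have m2 := hcon (x - A.J x) (Or.inr (by rw [map_sub, A.J_inv, neg_sub]))
    have m3 := (A.lcs 1).add_mem m1 m2
    have e : x + A.J x + (x - A.J x) = (2 : K) • x := by rw [two_smul]; abel
    rw [e] at m3
    exact ((A.lcs 1).smul_mem_iff h2).mp m3
  -- the derived algebra is left central
  have hcen : ∀ u ∈ A.lcs 1, ∀ v, A.br u v = 0 := by
    intro u hu v
    by_contra hw0
    have hw2 : A.br u v ∈ A.lcs 2 := Submodule.subset_span ⟨u, hu, v, rfl⟩
    obtain ⟨-, hs⟩ := A.indep_span hdim (A.lcs 1) (A.br_mem u v) hw0 hyD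
    apply hD0
    apply A.lcs_eq_bot hnil
    intro d hd
    have : d ∈ Submodule.span K ({A.br u v, y} : Set A.carrier) := hs ▸ Submodule.mem_top
    obtain ⟨a, b, rfl⟩ := Submodule.mem_span_pair.mp this
    have hby : b • y ∈ A.lcs 1 :=
      ((A.lcs 1).add_mem_iff_right ((A.lcs 1).smul_mem a (A.br_mem u v))).mp hd
    have hb : b = 0 := by
      by_contra hb
      exact hyD (((A.lcs 1).smul_mem_iff hb).mp hby)
    rw [hb, zero_smul, add_zero]
    exact (A.lcs 2).smul_mem a hw2
  obtain ⟨z, hz, hz0⟩ := (Submodule.ne_bot_iff _).mp hD0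
  obtain ⟨-, hs⟩ := A.indep_span hdim (A.lcs 1) hz hz0 hyD
  have hyz : A.br y z = 0 := A.right_central h2 (hcen z hz) hyJ
  have hyy : A.br y y ≠ 0 := by
    intro h
    apply hna
    intro p q
    have hp : p ∈ Submodule.span K ({z, y} : Set A.carrier) := hs ▸ Submodule.mem_top
    have hq : q ∈ Submodule.span K ({z, y} : Set A.carrier) := hs ▸ Submodule.mem_top
    obtain ⟨a, b, rfl⟩ := Submodule.mem_span_pair.mp hp
    obtain ⟨c, d, rfl⟩ := Submodule.mem_span_pair.mp hq
    simp [hcen z hz, hyz, h]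
  have hodd : A.J y = -y := by
    rcases hyJ with h | h
    · exfalso
      have e := A.skew_e y y h
      have e3 : (2 : K) • A.br y y = 0 := by
        rw [two_smul]; exact add_eq_zero_iff_eq_neg.mpr e
      exact hyy ((smul_eq_zero.mp e3).resolve_left h2)
    · exact h
  obtain ⟨hli, hsp⟩ := A.indep_span hdim (A.lcs 1) (A.br_mem y y) hyy hyD
  refine ⟨A.br y y, y, ?_, ?_, hli, hsp, rfl, ?_⟩
  · simp [evenPart, A.J_br, hodd]
  · simp [oddPart, hodd]
  · simp only [center, Submodule.mem_iInf, LinearMap.mem_ker, LinearMap.flip_apply]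
    exact hcen _ (A.br_mem y y)
end

section
/- There is no nilpotent Lie superalgebra L of total dimension 3 with dim Z(L) = 2 and dim L' = 2 (and likewise none with dim Z(L) = 1 and dim L' = 2), over a field of characteristic ≠ 2,3. -/
open Module Function TensorProduct

open SuperLie
theorem SuperLie.lcs_J {K : Type} [Field K] (A : SuperLie K) (k : ℕ) :
    ∀ c ∈ A.lcs k, A.J c ∈ A.lcs k := by
  induction k with
  | zero => intro c _; exact Submodule.mem_top
  | succ k ih =>
    intro c hc
    have hc' : c ∈ Submodule.span K {z | ∃ x ∈ lcs A k, ∃ y, A.br x y = z} := hc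
    change A.J c ∈ Submodule.span K {z | ∃ x ∈ lcs A k, ∃ y, A.br x y = z}
    induction hc' using Submodule.span_induction with
    | mem z hz =>
      obtain ⟨x, hx, y, rfl⟩ := hz
      rw [A.J_br]
      exact Submodule.subset_span ⟨_, ih x hx, _, rfl⟩
    | zero => simp
    | add u v hu hv h1 h2 => rw [map_add]; exact add_mem (h1 hu) (h2 hv)
    | smul a u hu h1 => rw [map_smul]; exact Submodule.smul_mem _ _ (h1 hu)

theorem SuperLie.split {K : Type} [Field K] (h2 : (2 : K) ≠ 0) (A : SuperLie K)
    (M : Submodule K A.carrier) (hM : ∀ c ∈ M, A.J c ∈ M) (c : A.carrier) (hc : c ∈ M) :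
    ∃ u ∈ M, ∃ v ∈ M, A.J u = u ∧ A.J v = -v ∧ c = u + v := by
  refine ⟨(2⁻¹ : K) • (c + A.J c), M.smul_mem _ (M.add_mem hc (hM c hc)),
    (2⁻¹ : K) • (c - A.J c), M.smul_mem _ (M.sub_mem hc (hM c hc)), ?_, ?_, ?_⟩
  · rw [map_smul, map_add, A.J_inv, add_comm]
  · rw [map_smul, map_sub, A.J_inv, ← smul_neg, neg_sub]
  · rw [← smul_add, add_add_sub_cancel, ← two_smul K c, smul_smul, inv_mul_cancel₀ h2, one_smul]

theorem SuperLie.br_mem_lcs {K : Type} [Field K] (h2 : (2 : K) ≠ 0) (A : SuperLie K) (k : ℕ)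
    (l c : A.carrier) (hc : c ∈ A.lcs k) : A.br l c ∈ A.lcs (k+1) := by
  have key : ∀ u ∈ A.lcs k, ∀ y, A.br u y ∈ A.lcs (k+1) := fun u hu y =>
    Submodule.subset_span ⟨u, hu, y, rfl⟩
  obtain ⟨u, hu, v, hv, hJu, hJv, rfl⟩ := A.split h2 _ (A.lcs_J k) c hc
  obtain ⟨p, -, q, -, hJp, hJq, rfl⟩ := A.split h2 ⊤ (fun _ _ => Submodule.mem_top) l
    Submodule.mem_top
  have e1 : A.br p u = - A.br u p := A.skew_e _ _ hJp
  have e2 : A.br p v = - A.br v p := A.skew_e _ _ hJp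
  have e3 : A.br q u = - A.br u q := by rw [A.skew_e u q hJu, neg_neg]
  have e4 : A.br q v = A.br v q := A.skew_o _ _ hJq hJv
  simp only [map_add, LinearMap.add_apply, e1, e2, e3, e4]
  exact add_mem (add_mem (neg_mem (key u hu p)) (neg_mem (key u hu q)))
    (add_mem (neg_mem (key v hv p)) (key v hv q))

theorem SuperLie.eq_zero_of_neg {K : Type} [Field K] (h2 : (2 : K) ≠ 0) (A : SuperLie K)
    (v : A.carrier) (h : v = -v) : v = 0 := by
  have : (2 : K) • v = 0 := by rw [two_smul]; nth_rewrite 1 [h]; simp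
  exact (smul_eq_zero.mp this).resolve_left h2

theorem SuperLie.finrank_derived_ne {K : Type} [Field K] (h2 : (2 : K) ≠ 0) (h3 : (3 : K) ≠ 0)
    (A : SuperLie K) [FiniteDimensional K A.carrier]
    (hnil : A.IsNilpotent) (hdim : finrank K A.carrier = 3) : finrank K A.derived ≠ 2 := by
  intro hD
  have hx : ∃ x, x ∉ A.derived ∧ (A.J x = x ∨ A.J x = -x) := by
    by_contra! hcon
    have : A.derived = ⊤ := by
      rw [eq_top_iff]
      intro l _
      obtain ⟨p, -, q, -, hJp, hJq, rfl⟩ := A.split h2 ⊤ (fun _ _ => Submodule.mem_top) l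
        Submodule.mem_top
      refine add_mem ?_ ?_
      · by_contra h; exact (hcon p h).1 hJp
      · by_contra h; exact (hcon q h).2 hJq
    rw [this, finrank_top] at hD
    omega
  obtain ⟨x, hxD, hJ⟩ := hx
  have hsup : Submodule.span K {x} ⊔ A.derived = ⊤ := by
    apply Submodule.eq_top_of_finrank_eq
    have hlt : A.derived < Submodule.span K {x} ⊔ A.derived := by
      refine lt_of_le_of_ne le_sup_right fun h => hxD ?_
      rw [h]
      exact Submodule.mem_sup_left (Submodule.mem_span_singleton_self x)
    have h1 := Submodule.finrank_lt_finrank_of_lt hlt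
    have h4 := Submodule.finrank_le (Submodule.span K {x} ⊔ A.derived)
    omega
  set y := A.br x x with hy
  have hJy : A.J y = y := by
    rw [hy, A.J_br]
    rcases hJ with h | h <;> simp [h]
  have hyy : A.br y y = 0 := A.eq_zero_of_neg h2 _ (A.skew_e y y hJy)
  have hxy : A.br x y = 0 := by
    rcases hJ with h | h
    · have : y = 0 := A.eq_zero_of_neg h2 _ (A.skew_e x x h)
      rw [this, map_zero]
    · have := A.jacobi true true true x x x (by simpa using h) (by simpa using h)
        (by simpa using h)
      simp only [Bool.and_self, if_true, ← hy] at this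
      have h5 : (-3 : K) • A.br x y = 0 := by
        rw [← this, ← add_smul, ← add_smul]; norm_num
      exact (smul_eq_zero.mp h5).resolve_left (neg_ne_zero.mpr h3)
  have hyx : A.br y x = 0 := by rw [A.skew_e y x hJy, hxy, neg_zero]
  set S := Submodule.span K ({x, y} : Set A.carrier) with hS
  have hyS : y ∈ S := Submodule.subset_span (by simp)
  have hxS : x ∈ S := Submodule.subset_span (by simp)
  have hSS : ∀ s ∈ S, ∀ t ∈ S, A.br s t ∈ S := by
    intro s hs t ht
    obtain ⟨a, b, rfl⟩ := Submodule.mem_span_pair.mp hs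
    obtain ⟨c, d, rfl⟩ := Submodule.mem_span_pair.mp ht
    simp only [map_add, map_smul, LinearMap.add_apply, LinearMap.smul_apply, hxy, hyx, hyy, ← hy,
      smul_zero, add_zero]
    exact S.smul_mem _ (S.smul_mem _ hyS)
  have hk : ∀ k, S ⊔ A.lcs k = ⊤ := by
    intro k
    induction k with
    | zero => exact sup_top_eq _
    | succ k ih =>
      rw [eq_top_iff, ← hsup, sup_le_iff]
      constructor
      · rw [Submodule.span_singleton_le_iff_mem]
        exact Submodule.mem_sup_left hxS
      · refine Submodule.span_le.mpr ?_
        rintro _ ⟨p, q, rfl⟩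
        obtain ⟨s, hs, c, hc, rfl⟩ := Submodule.mem_sup.mp (ih ▸ Submodule.mem_top : p ∈ S ⊔ A.lcs k)
        obtain ⟨t, ht, d, hd, rfl⟩ := Submodule.mem_sup.mp (ih ▸ Submodule.mem_top : q ∈ S ⊔ A.lcs k)
        have e : A.br (s + c) (t + d) = A.br s t + (A.br s d + A.br c (t + d)) := by
          simp only [map_add, LinearMap.add_apply]; abel
        rw [e]
        exact Submodule.add_mem_sup (hSS s hs t ht) (add_mem (A.br_mem_lcs h2 k s d hd)
          (Submodule.subset_span ⟨c, hc, _, rfl⟩))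
  obtain ⟨k, hk0⟩ := hnil
  have hSt := hk k
  rw [hk0, sup_bot_eq] at hSt
  have h6 : finrank K S ≤ 2 := by
    classical
    have h7 := finrank_span_finset_le_card (R := K) ({x, y} : Finset A.carrier)
    have h8 := Finset.card_le_two (a := x) (b := y)
    rw [Set.finrank, Finset.coe_pair] at h7
    exact h7.trans h8
  rw [hSt, finrank_top] at h6
  omega

/-- There is no nilpotent Lie superalgebra of total dimension 3
with `dim Z(L) = 2` and `dim L' = 2`, nor with `dim Z(L) = 1` and `dim L' = 2`. -/
theorem stmt9 {K : Type} [Field K] (h2 : (2 : K) ≠ 0) (h3 : (3 : K) ≠ 0)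
    (A : SuperLie K) [FiniteDimensional K A.carrier]
    (hnil : A.IsNilpotent) (hdim : finrank K A.carrier = 3) :
    ¬ (finrank K A.center = 2 ∧ finrank K A.derived = 2) ∧
    ¬ (finrank K A.center = 1 ∧ finrank K A.derived = 2) := by
  exact ⟨fun h => A.finrank_derived_ne h2 h3 hnil hdim h.2,
    fun h => A.finrank_derived_ne h2 h3 hnil hdim h.2⟩
end

section
/- Let L be a nilpotent Lie superalgebra of dimension (m | n) with dim L' = (0 | 1), over a field of characteristic ≠ 2,3. Then L ≅ H_p ⊕ A(m-p | n-p-1) for some p ≥ 1, where H_p is the special Heisenberg Lie superalgebra with odd center and A(r | s) is the abelian Lie superalgebra of dimension (r | s). -/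
open Module Function TensorProduct

open SuperLie

theorem exists_basis_of_isCompl {K V : Type*} {ι κ : Type*} [Field K] [AddCommGroup V] [Module K V]
    (P Q : Submodule K V) (h : IsCompl P Q) (bP : Basis ι K P) (bQ : Basis κ K Q) :
    ∃ b : Basis (ι ⊕ κ) K V, (∀ i, b (Sum.inl i) = bP i) ∧ (∀ j, b (Sum.inr j) = bQ j) := by
  refine ⟨(bP.prod bQ).map (Submodule.prodEquivOfIsCompl P Q h), ?_, ?_⟩
  · intro i; simp
  · intro j; simp

theorem pairing_normal_form {K E O : Type*} [Field K] [AddCommGroup E] [Module K E]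
    [AddCommGroup O] [Module K O] [FiniteDimensional K E] [FiniteDimensional K O]
    (B : E →ₗ[K] O →ₗ[K] K) (z : O) (hz : z ≠ 0) (hBz : ∀ e, B e z = 0) :
    ∃ (p a b : ℕ) (bE : Basis (Fin p ⊕ Fin a) K E) (bO : Basis (Fin p ⊕ (Fin 1 ⊕ Fin b)) K O),
      (∀ i, B (bE (Sum.inr i)) = 0) ∧
      (∀ e j, B e (bO (Sum.inr j)) = 0) ∧
      (∀ i j, B (bE (Sum.inl i)) (bO (Sum.inl j)) = if i = j then 1 else 0) ∧
      bO (Sum.inr (Sum.inl 0)) = z := by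
  obtain ⟨C, hC⟩ := Submodule.exists_isCompl (LinearMap.ker B)
  obtain ⟨bE, hE1, hE2⟩ := exists_basis_of_isCompl C (LinearMap.ker B) hC.symm
    (Module.finBasis K C) (Module.finBasis K (LinearMap.ker B))
  have hE2' : ∀ i, B (bE (Sum.inr i)) = 0 := by
    intro i; rw [hE2]; exact (Module.finBasis K (LinearMap.ker B) i).2
  let Φ : O →ₗ[K] (Fin (finrank K C) → K) := LinearMap.pi fun i => B (bE (Sum.inl i))
  have hΦ : LinearMap.range Φ = ⊤ := by
    by_contra hne
    obtain ⟨f, hf0, hf⟩ := Submodule.exists_le_ker_of_lt_top _ (lt_top_iff_ne_top.2 hne)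
    apply hf0
    have hsum : ∀ w, f w = ∑ i, w i * f (Pi.single i 1) := by
      intro w
      conv_lhs => rw [pi_eq_sum_univ' w]
      simp [map_sum, Pi.single_apply, eq_comm]
    have hker : (∑ i, f (Pi.single i 1) • (Module.finBasis K C i : E)) ∈ LinearMap.ker B := by
      rw [LinearMap.mem_ker]
      ext o
      have := hf (LinearMap.mem_range_self Φ o)
      rw [LinearMap.mem_ker, hsum] at this
      simpa [Φ, hE1, mul_comm] using this
    have hCm : (∑ i, f (Pi.single i 1) • (Module.finBasis K C i : E)) ∈ C :=
      Submodule.sum_mem _ fun i _ => Submodule.smul_mem _ _ (Module.finBasis K C i).2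
    have h0 := Submodule.disjoint_def.1 hC.disjoint _ hker hCm
    have h0' : ∑ i, f (Pi.single i 1) • Module.finBasis K C i = 0 := by
      apply Subtype.ext
      simpa using h0
    have := Fintype.linearIndependent_iff.1 (Module.finBasis K C).linearIndependent _ h0'
    ext i
    simp [this]
  obtain ⟨s, hs⟩ := Φ.exists_rightInverse_of_surjective hΦ
  have hs' : ∀ w, Φ (s w) = w := fun w => LinearMap.congr_fun hs w
  have hcompl : IsCompl (LinearMap.range s) (LinearMap.ker Φ) := by
    constructor
    · rw [Submodule.disjoint_def]
      rintro _ ⟨w, rfl⟩ h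
      rw [LinearMap.mem_ker, hs'] at h
      simp [h]
    · rw [codisjoint_iff, eq_top_iff]
      intro o _
      rw [Submodule.mem_sup]
      refine ⟨s (Φ o), ⟨_, rfl⟩, o - s (Φ o), ?_, by abel⟩
      simp [hs']
  have hinj : Function.Injective s := Function.LeftInverse.injective hs'
  let bY := (Pi.basisFun K (Fin (finrank K C))).map (LinearEquiv.ofInjective s hinj)
  have hzN : z ∈ LinearMap.ker Φ := by
    rw [LinearMap.mem_ker]; ext i; simp [Φ, hBz]
  let z' : LinearMap.ker Φ := ⟨z, hzN⟩
  have hz' : z' ≠ 0 := fun h => hz (congrArg Subtype.val h)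
  obtain ⟨D, hD⟩ := Submodule.exists_isCompl (K ∙ z')
  obtain ⟨bN, hN1, hN2⟩ := exists_basis_of_isCompl (K ∙ z') D hD
    ((Basis.singleton (Fin 1) K).map (LinearEquiv.toSpanNonzeroSingleton K _ z' hz'))
    (Module.finBasis K D)
  obtain ⟨bO, hO1, hO2⟩ := exists_basis_of_isCompl _ _ hcompl bY bN
  refine ⟨_, _, _, bE, bO, hE2', ?_, ?_, ?_⟩
  · intro e j
    have hj : Φ (bO (Sum.inr j)) = 0 := by rw [hO2]; exact (bN j).2
    have : B.flip (bO (Sum.inr j)) = 0 := by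
      apply bE.ext
      rintro (i | i)
      · exact congrFun hj i
      · simp [hE2']
    exact LinearMap.congr_fun this e
  · intro i j
    have : Φ (bO (Sum.inl j)) = Pi.single j 1 := by
      rw [hO1]; simp [bY, hs']
    have := congrFun this i
    simpa [Φ, Pi.single_apply] using this
  · rw [hO2, hN1]
    simp [z']

theorem SuperLie.isCompl_parts {K : Type} [Field K] (h2 : (2 : K) ≠ 0) (A : SuperLie K) :
    IsCompl A.evenPart A.oddPart := by
  constructor
  · rw [Submodule.disjoint_def]
    intro x hx hy
    simp only [evenPart, oddPart, LinearMap.mem_ker, LinearMap.sub_apply, LinearMap.add_apply,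
      LinearMap.id_apply] at hx hy
    have : (2 : K) • x = 0 := by
      have h : (A.J x + x) - (A.J x - x) = 0 := by rw [hx, hy, sub_zero]
      rw [two_smul, ← h]; abel
    exact (smul_eq_zero.1 this).resolve_left h2
  · rw [codisjoint_iff, eq_top_iff]
    intro x _
    rw [Submodule.mem_sup]
    refine ⟨(2 : K)⁻¹ • (x + A.J x), ?_, (2 : K)⁻¹ • (x - A.J x), ?_, ?_⟩
    · simp [evenPart, A.J_inv, add_comm, ← smul_sub]
    · simp [oddPart, A.J_inv, ← smul_add]
    · rw [← smul_add, add_add_sub_cancel, ← two_smul K x, smul_smul, inv_mul_cancel₀ h2, one_smul]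

theorem SuperLie.mem_even {K : Type} [Field K] (A : SuperLie K) (x : A.carrier) :
    x ∈ A.evenPart ↔ A.J x = x := by
  simp [evenPart, sub_eq_zero]

theorem SuperLie.mem_odd {K : Type} [Field K] (A : SuperLie K) (x : A.carrier) :
    x ∈ A.oddPart ↔ A.J x = -x := by
  simp [oddPart, add_eq_zero_iff_eq_neg]

/-- A nilpotent Lie superalgebra of dimension `(m|n)` with
`dim L' = (0|1)` is isomorphic to `H_p ⊕ A(m-p | n-p-1)` for some `p ≥ 1`. -/
theorem stmt11 {K : Type} [Field K] (h2 : (2 : K) ≠ 0) (h3 : (3 : K) ≠ 0)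
    (A : SuperLie K) [FiniteDimensional K A.carrier] (hnil : A.IsNilpotent)
    (m n : ℕ) (hm : m = finrank K A.evenPart) (hn : n = finrank K A.oddPart)
    (hd : finrank K A.derived = 1) (hdo : A.derived ≤ A.oddPart) :
    ∃ p a b : ℕ, 1 ≤ p ∧ m = p + a ∧ n = p + 1 + b ∧
      A.IsHeisOddSum p a b := by
  have hc := A.isCompl_parts h2
  have hdec : ∀ w : A.carrier, ∃ e ∈ A.evenPart, ∃ o ∈ A.oddPart, e + o = w := by
    intro w
    have : w ∈ A.evenPart ⊔ A.oddPart := by rw [hc.sup_eq_top]; trivial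
    exact Submodule.mem_sup.1 this
  have hdisj := Submodule.disjoint_def.1 hc.disjoint
  have hmemd : ∀ x y, A.br x y ∈ A.derived := fun x y => Submodule.subset_span ⟨x, y, rfl⟩
  obtain ⟨⟨z, hzd⟩, hz0, hzs⟩ := finrank_eq_one_iff'.1 hd
  have hz0 : z ≠ 0 := fun h => hz0 (Subtype.ext h)
  have hzspan : ∀ w ∈ A.derived, ∃ c : K, c • z = w := by
    intro w hw
    obtain ⟨c, hc⟩ := hzs ⟨w, hw⟩
    exact ⟨c, congrArg Subtype.val hc⟩
  have hzo : z ∈ A.oddPart := hdo hzd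
  have hee : ∀ x ∈ A.evenPart, ∀ y ∈ A.evenPart, A.br x y = 0 := by
    intro x hx y hy
    refine hdisj _ ?_ (hdo (hmemd x y))
    rw [SuperLie.mem_even] at *
    rw [A.J_br, hx, hy]
  have hoo : ∀ x ∈ A.oddPart, ∀ y ∈ A.oddPart, A.br x y = 0 := by
    intro x hx y hy
    refine hdisj _ ?_ (hdo (hmemd x y))
    rw [SuperLie.mem_even]
    rw [SuperLie.mem_odd] at hx hy
    rw [A.J_br, hx, hy]; simp
  have hzc : ∀ w, A.br z w = 0 := by
    intro w
    obtain ⟨c, hcw⟩ := hzspan _ (hmemd z w)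
    by_cases h : c = 0
    · rw [← hcw, h, zero_smul]
    exfalso
    have hall : ∀ k, z ∈ A.lcs k := by
      intro k
      induction k with
      | zero => exact Submodule.mem_top
      | succ k ih =>
        have h1 : A.br z w ∈ A.lcs (k+1) := Submodule.subset_span ⟨z, ih, w, rfl⟩
        rw [← hcw] at h1
        exact (Submodule.smul_mem_iff _ h).1 h1
    obtain ⟨k, hk⟩ := hnil
    have := hall k
    rw [hk, Submodule.mem_bot] at this
    exact hz0 this
  have hcenter : ∀ w, w ∈ A.center ↔ ∀ y, A.br w y = 0 := by
    intro w; simp [center]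
  obtain ⟨f, hf⟩ := Module.Projective.exists_dual_eq_one K hz0
  have hbr : ∀ x y, A.br x y = f (A.br x y) • z := by
    intro x y
    obtain ⟨c, hcw⟩ := hzspan _ (hmemd x y)
    rw [← hcw, map_smul, hf]; simp
  let B : A.evenPart →ₗ[K] A.oddPart →ₗ[K] K :=
    ((A.br.compr₂ f).domRestrict₁₂ A.evenPart A.oddPart)
  have hB : ∀ (e : A.evenPart) (o : A.oddPart), A.br e o = B e o • z := fun e o => hbr e o
  have hskew : ∀ e ∈ A.evenPart, ∀ w, A.br w e = - A.br e w := by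
    intro e he w
    rw [A.skew_e e w ((A.mem_even e).1 he), neg_neg]
  obtain ⟨p, a, b, bE, bO, hu, hv, hxy, hbz⟩ := pairing_normal_form B ⟨z, hzo⟩
    (fun h => hz0 (congrArg Subtype.val h)) (by
      intro e
      have h1 := hskew e e.2 z
      rw [hzc] at h1
      have h2 : A.br e z = 0 := neg_eq_zero.1 h1.symm
      change f (A.br e z) = 0
      rw [h2, map_zero])
  obtain ⟨bA, hA1, hA2⟩ := exists_basis_of_isCompl _ _ hc bE bO
  have hm' : m = p + a := by rw [hm, finrank_eq_card_basis bE]; simp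
  have hn' : n = p + 1 + b := by rw [hn, finrank_eq_card_basis bO]; simp [add_assoc]
  let σ : Fin p ⊕ (Fin p ⊕ (Fin 1 ⊕ (Fin a ⊕ Fin b))) →
      (Fin p ⊕ Fin a) ⊕ (Fin p ⊕ (Fin 1 ⊕ Fin b)) :=
    Sum.elim (fun i => Sum.inl (Sum.inl i)) <| Sum.elim (fun i => Sum.inr (Sum.inl i)) <|
      Sum.elim (fun i => Sum.inr (Sum.inr (Sum.inl i))) <|
      Sum.elim (fun i => Sum.inl (Sum.inr i)) (fun i => Sum.inr (Sum.inr (Sum.inr i)))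
  have hσi : Function.Injective σ := by
    rintro (i | i | i | i | i) (j | j | j | j | j) h <;>
      simp only [σ, Sum.elim_inl, Sum.elim_inr, Sum.inl.injEq, Sum.inr.injEq, reduceCtorEq] at h ⊢ <;>
      exact h
  have hσs : Function.Surjective σ := by
    rintro ((i | i) | (i | i | i))
    · exact ⟨Sum.inl i, rfl⟩
    · exact ⟨Sum.inr (Sum.inr (Sum.inr (Sum.inl i))), rfl⟩
    · exact ⟨Sum.inr (Sum.inl i), rfl⟩
    · exact ⟨Sum.inr (Sum.inr (Sum.inl i)), rfl⟩
    · exact ⟨Sum.inr (Sum.inr (Sum.inr (Sum.inr i))), rfl⟩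
  have hfam : (Sum.elim (fun i => (bE (Sum.inl i) : A.carrier))
      (Sum.elim (fun i => (bO (Sum.inl i) : A.carrier)) (Sum.elim (fun _ : Fin 1 => z)
      (Sum.elim (fun i => (bE (Sum.inr i) : A.carrier))
        (fun i => (bO (Sum.inr (Sum.inr i)) : A.carrier)))))) = bA ∘ σ := by
    funext t
    rcases t with (i | i | i | i | i)
    · simp [σ, hA1]
    · simp [σ, hA2]
    · have : i = 0 := Subsingleton.elim _ _
      subst this
      simp [σ, hA2, hbz]
    · simp [σ, hA1]
    · simp [σ, hA2]
  have hucen : ∀ i, (bE (Sum.inr i) : A.carrier) ∈ A.center := by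
    intro i
    rw [hcenter]
    intro w
    obtain ⟨e, he, o, ho, rfl⟩ := hdec w
    rw [map_add, hee _ (bE (Sum.inr i)).2 e he, hB _ ⟨o, ho⟩, hu]
    simp
  have hvcen : ∀ i, (bO (Sum.inr i) : A.carrier) ∈ A.center := by
    intro i
    rw [hcenter]
    intro w
    obtain ⟨e, he, o, ho, rfl⟩ := hdec w
    rw [map_add, hoo _ (bO (Sum.inr i)).2 o ho, hskew e he, hB ⟨e, he⟩, hv]
    simp
  refine ⟨p, a, b, ?_, hm', hn', fun i => bE (Sum.inl i), fun i => bO (Sum.inl i), z,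
    fun i => bE (Sum.inr i), fun i => bO (Sum.inr (Sum.inr i)), fun i => (bE _).2,
    fun i => (bO _).2, hzo, fun i => (bE _).2, fun i => (bO _).2, ?_, ?_, 
    fun i j => hee _ (bE _).2 _ (bE _).2, fun i j => hoo _ (bO _).2 _ (bO _).2, ?_,
    (hcenter z).2 hzc, hucen, fun i => hvcen _⟩
  · by_contra hp
    have hp0 : p = 0 := by omega
    subst hp0
    have hBe : B = 0 := by
      apply bE.ext
      rintro (i | i)
      · exact i.elim0
      · simp [hu]
    have hall : ∀ x y, A.br x y = 0 := by
      intro x y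
      obtain ⟨e, he, o, ho, rfl⟩ := hdec x
      obtain ⟨e', he', o', ho', rfl⟩ := hdec y
      have h1 : A.br e o' = 0 := by rw [hB ⟨e, he⟩ ⟨o', ho'⟩, hBe]; simp
      have h2 : A.br o e' = 0 := by
        rw [hskew e' he', hB ⟨e', he'⟩ ⟨o, ho⟩, hBe]; simp
      simp [h1, h2, hee e he e' he', hoo o ho o' ho']
    have : A.derived = ⊥ := by
      rw [derived, Submodule.span_eq_bot]
      rintro _ ⟨x, y, rfl⟩
      exact hall x y
    rw [this] at hd
    simp at hd
  · rw [hfam]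
    exact bA.linearIndependent.comp _ hσi
  · rw [hfam, hσs.range_comp, bA.span_eq]
  · intro i j
    rw [hB, hxy]
    split_ifs <;> simp
end

section
/- Let L be a nilpotent Lie superalgebra of dimension (5 | 0) with dim L' = 2 and L' = Z(L), over a field of characteristic ≠ 2,3. Then L ≅ L_{5,0}^2, the Lie algebra with basis x, y, z, v, w and nonzero brackets [x,y] = v, [y,z] = w. -/
open Module Function TensorProduct

open SuperLie
theorem SuperLie.mem_center_iff {K : Type} [Field K] (A : SuperLie K) (z : A.carrier) :
    z ∈ A.center ↔ ∀ y, A.br z y = 0 := by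
  simp [SuperLie.center]

/-- Any element decomposes along three vectors spanning a complement of the center. -/
theorem SuperLie.exists_three {K : Type} [Field K] (A : SuperLie K)
    [FiniteDimensional K A.carrier] (h5 : finrank K A.carrier = 5)
    (hz : finrank K A.center = 2) :
    ∃ a b c : A.carrier, ∀ u, ∃ (α β γ : K) (z : A.carrier), z ∈ A.center ∧
      u = α • a + β • b + γ • c + z := by
  obtain ⟨C, hC⟩ := Submodule.exists_isCompl A.center
  have h3 : finrank K C = 3 := by
    have := Submodule.finrank_add_eq_of_isCompl hC
    omega
  let B := finBasisOfFinrankEq K C h3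
  refine ⟨B 0, B 1, B 2, fun u => ?_⟩
  have hu : u ∈ A.center ⊔ C := by rw [hC.sup_eq_top]; trivial
  obtain ⟨z, hz, t, ht, rfl⟩ := Submodule.mem_sup.1 hu
  refine ⟨B.repr ⟨t, ht⟩ 0, B.repr ⟨t, ht⟩ 1, B.repr ⟨t, ht⟩ 2, z, hz, ?_⟩
  have := congrArg (Subtype.val) (B.sum_repr ⟨t, ht⟩)
  simp only [Fin.sum_univ_three, Submodule.coe_add, Submodule.coe_smul] at this
  rw [this, add_comm]

theorem SuperLie.derived_le_three {K : Type} [Field K] (A : SuperLie K) 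
    (hsk : ∀ x y, A.br x y = - A.br y x) (hself : ∀ x, A.br x x = 0)
    (a b c : A.carrier) (h : ∀ u, ∃ (α β γ : K) (z : A.carrier), z ∈ A.center ∧
      u = α • a + β • b + γ • c + z) :
    A.derived ≤ Submodule.span K {A.br a b, A.br b c, A.br c a} := by
  refine Submodule.span_le.2 ?_
  rintro _ ⟨u, v, rfl⟩
  obtain ⟨α, β, γ, z, hz, rfl⟩ := h u
  obtain ⟨α', β', γ', z', hz', rfl⟩ := h v
  rw [A.mem_center_iff] at hz hz'
  have hz'' : ∀ y, A.br y z' = 0 := fun y => by rw [hsk, hz', neg_zero]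
  refine Submodule.mem_span_triple.2 ⟨α * β' - β * α', β * γ' - γ * β', γ * α' - α * γ', ?_⟩
  simp only [map_add, map_smul, LinearMap.add_apply, LinearMap.smul_apply, hz, hz'', hself]
  rw [hsk b a, hsk c b, hsk a c]
  module

theorem SuperLie.isL502_aux {K : Type} [Field K] (A : SuperLie K)
    [FiniteDimensional K A.carrier] (h5 : finrank K A.carrier = 5)
    (hev : ∀ x, x ∈ A.evenPart)
    (hsk : ∀ x y, A.br x y = - A.br y x) (hzd : A.derived = A.center)
    (a b c : A.carrier) (h : ∀ u, ∃ (α β γ : K) (z : A.carrier), z ∈ A.center ∧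
      u = α • a + β • b + γ • c + z)
    (hle : A.derived ≤ Submodule.span K {A.br a b, A.br b c, A.br c a})
    (hself : ∀ x, A.br x x = 0) (k l m : K) (hk : k ≠ 0)
    (hrel : k • A.br a b + l • A.br b c + m • A.br c a = 0) : A.IsL502 := by
  have hcen : ∀ x y, A.br x y ∈ A.center := fun x y => by
    rw [← hzd]; exact Submodule.subset_span ⟨x, y, rfl⟩
  have hab : A.br a b = (-(l / k)) • A.br b c + (-(m / k)) • A.br c a := by
    have h1 : k • A.br a b = (-l) • A.br b c + (-m) • A.br c a := by
      rw [← sub_eq_zero, ← hrel]; module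
    have h2 : A.br a b = k⁻¹ • (k • A.br a b) := by rw [smul_smul, inv_mul_cancel₀ hk, one_smul]
    rw [h2, h1, div_eq_mul_inv, div_eq_mul_inv]; module
  set s := l / k
  set t := m / k
  have hspan : Submodule.span K
      ({a - s • c, c, b - t • c, A.br a c, A.br c b} : Set A.carrier) = ⊤ := by
    set S := Submodule.span K ({a - s • c, c, b - t • c, A.br a c, A.br c b} : Set A.carrier)
    have m1 : a - s • c ∈ S := Submodule.subset_span (by simp)
    have m2 : c ∈ S := Submodule.subset_span (by simp)
    have m3 : b - t • c ∈ S := Submodule.subset_span (by simp)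
    have m4 : A.br c a ∈ S := by
      rw [hsk]; exact S.neg_mem (Submodule.subset_span (by simp))
    have m5 : A.br b c ∈ S := by
      rw [hsk]; exact S.neg_mem (Submodule.subset_span (by simp))
    have ma : a ∈ S := by simpa using S.add_mem m1 (S.smul_mem s m2)
    have mb : b ∈ S := by simpa using S.add_mem m3 (S.smul_mem t m2)
    have m6 : A.br a b ∈ S := by
      rw [hab]; exact S.add_mem (S.smul_mem _ m5) (S.smul_mem _ m4)
    have mz : A.center ≤ S := by
      rw [← hzd]
      refine hle.trans (Submodule.span_le.2 ?_)
      rintro _ (rfl | rfl | rfl) <;> assumption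
    rw [eq_top_iff]
    intro u _
    obtain ⟨α, β, γ, z, hz, rfl⟩ := h u
    exact S.add_mem (S.add_mem (S.add_mem (S.smul_mem _ ma) (S.smul_mem _ mb))
      (S.smul_mem _ m2)) (mz hz)
  refine ⟨a - s • c, c, b - t • c, A.br a c, A.br c b, hev _, hev _, hev _, hev _, hev _,
    ?_, hspan, ?_, ?_, ?_, hcen _ _, hcen _ _⟩
  · refine linearIndependent_of_top_le_span_of_card_eq_finrank ?_ (by simp [h5])
    rw [← hspan]
    refine Submodule.span_mono ?_
    rintro _ (rfl | rfl | rfl | rfl | rfl)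
    exacts [⟨0, rfl⟩, ⟨1, rfl⟩, ⟨2, rfl⟩, ⟨3, rfl⟩, ⟨4, rfl⟩]
  · simp [hself]
  · simp [hself]
  · simp only [map_sub, map_smul, LinearMap.sub_apply, LinearMap.smul_apply, hself]
    rw [hab, hsk a c, hsk c b]
    module

/-- A nilpotent Lie superalgebra of dimension `(5|0)` with
`dim L' = 2` and `L' = Z(L)` is isomorphic to `L_{5,0}^2`. -/
theorem stmt14 {K : Type} [Field K] (h2 : (2 : K) ≠ 0) (h3 : (3 : K) ≠ 0)
    (A : SuperLie K) [FiniteDimensional K A.carrier] (hnil : A.IsNilpotent)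
    (hm : finrank K A.evenPart = 5) (hn : finrank K A.oddPart = 0)
    (hd : finrank K A.derived = 2) (hzd : A.derived = A.center) :
    A.IsL502 := by
  have hJ : ∀ x, A.J x = x := by
    intro x
    have h0 : A.oddPart = ⊥ := Submodule.finrank_eq_zero.1 hn
    have h1 : x - A.J x ∈ A.oddPart := by
      simp [SuperLie.oddPart, A.J_inv]
    rw [h0, Submodule.mem_bot, sub_eq_zero] at h1
    exact h1.symm
  have hev : ∀ x, x ∈ A.evenPart := fun x => by simp [SuperLie.evenPart, hJ]
  have h5 : finrank K A.carrier = 5 := by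
    have : A.evenPart = ⊤ := eq_top_iff.2 fun x _ => hev x
    rw [this, finrank_top] at hm
    exact hm
  have hsk : ∀ x y, A.br x y = - A.br y x := fun x y => A.skew_e x y (hJ x)
  have hself : ∀ x, A.br x x = 0 := by
    intro x
    have h1 : (2 : K) • A.br x x = 0 := by
      rw [two_smul]; nth_rewrite 1 [hsk x x]; simp
    exact (smul_eq_zero.1 h1).resolve_left h2
  obtain ⟨a, b, c, h⟩ := A.exists_three h5 (hzd ▸ hd)
  have hle := A.derived_le_three hsk hself a b c h
  have hdep : ¬ LinearIndependent K ![A.br a b, A.br b c, A.br c a] := by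
    intro hli
    have h1 := finrank_span_eq_card hli
    have h4 : Submodule.span K (Set.range ![A.br a b, A.br b c, A.br c a]) ≤ A.derived := by
      refine Submodule.span_mono ?_
      rintro _ ⟨i, rfl⟩
      fin_cases i
      exacts [⟨_, _, rfl⟩, ⟨_, _, rfl⟩, ⟨_, _, rfl⟩]
    have h6 := Submodule.finrank_mono h4
    simp only [Fintype.card_fin] at h1
    omega
  rw [Fintype.not_linearIndependent_iff] at hdep
  obtain ⟨g, hg, i, hi⟩ := hdep
  simp only [Fin.sum_univ_three, Matrix.cons_val] at hg
  fin_cases i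
  · exact A.isL502_aux h5 hev hsk hzd a b c h hle hself _ _ _ hi hg
  · refine A.isL502_aux h5 hev hsk hzd b c a ?_ ?_ hself (g 1) (g 2) (g 0) hi ?_
    · intro u
      obtain ⟨α, β, γ, z, hz, hu⟩ := h u
      exact ⟨β, γ, α, z, hz, by rw [hu]; abel⟩
    · refine hle.trans (Submodule.span_mono ?_)
      rintro _ (rfl | rfl | rfl) <;> simp
    · rw [← hg]; abel
  · refine A.isL502_aux h5 hev hsk hzd c a b ?_ ?_ hself (g 2) (g 0) (g 1) hi ?_
    · intro u
      obtain ⟨α, β, γ, z, hz, hu⟩ := h u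
      exact ⟨γ, α, β, z, hz, by rw [hu]; abel⟩
    · refine hle.trans (Submodule.span_mono ?_)
      rintro _ (rfl | rfl | rfl) <;> simp
    · rw [← hg]; abel
end
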